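/- Assume the Continuum Hypothesis. If X is a productively Lindelöf topological space with network weight nw(X) ≤ 𝔠, then X is powerfully Lindelöf. -/

import Mathlib

open Set Cardinal Topology

universe u v

/-- A space is quasi-Lindelöf if every open cover has a countable subcover
(no separation axioms assumed). -/
def QuasiLindelofSp (X : Type u) [TopologicalSpace X] : Prop :=
  ∀ 𝒰 : Set (Set X), (∀ U ∈ 𝒰, IsOpen U) → ⋃₀ 𝒰 = Set.univ →
    ∃ 𝒱 ⊆ 𝒰, 𝒱.Countable ∧ ⋃₀ 𝒱 = Set.univ

/-- Lindelöf in the sense of Engelking: regular (T3, including T1) and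
every open cover has a countable subcover. -/
def EngLindelofSp (X : Type u) [TopologicalSpace X] : Prop :=
  RegularSpace X ∧ T1Space X ∧ QuasiLindelofSp X

/-- X is productively Lindelöf if X × Y is Lindelöf for every Lindelöf space Y. -/
def ProductivelyLindelofSp (X : Type u) [TopologicalSpace X] : Prop :=
  ∀ (Y : Type u) [TopologicalSpace Y], EngLindelofSp Y → EngLindelofSp (X × Y)

/-- X is productively quasi-Lindelöf if X × Y is quasi-Lindelöf for every Lindelöf space Y. -/
def ProductivelyQuasiLindelofSp (X : Type u) [TopologicalSpace X] : Prop :=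
  ∀ (Y : Type u) [TopologicalSpace Y], EngLindelofSp Y → QuasiLindelofSp (X × Y)

/-- X is powerfully Lindelöf if X^ω is Lindelöf. -/
def PowerfullyLindelofSp (X : Type u) [TopologicalSpace X] : Prop :=
  EngLindelofSp (ℕ → X)

/-- X is powerfully quasi-Lindelöf if X^ω is quasi-Lindelöf. -/
def PowerfullyQuasiLindelofSp (X : Type u) [TopologicalSpace X] : Prop :=
  QuasiLindelofSp (ℕ → X)

/-- Tightness of X is at most κ. -/
def TightnessLE (X : Type u) [TopologicalSpace X] (κ : Cardinal.{u}) : Prop :=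
  ∀ (A : Set X) (x : X), x ∈ closure A → ∃ B ⊆ A, #B ≤ κ ∧ x ∈ closure B

/-- X has countable tightness. -/
def CountableTightness (X : Type u) [TopologicalSpace X] : Prop :=
  ∀ (A : Set X) (x : X), x ∈ closure A → ∃ B ⊆ A, B.Countable ∧ x ∈ closure B

/-- The Lindelöf number of X is at most κ: every open cover has a subcover of size ≤ κ. -/
def LindelofNumberLE (X : Type u) [TopologicalSpace X] (κ : Cardinal.{u}) : Prop :=
  ∀ 𝒰 : Set (Set X), (∀ U ∈ 𝒰, IsOpen U) → ⋃₀ 𝒰 = Set.univ →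
    ∃ 𝒱 ⊆ 𝒰, #𝒱 ≤ κ ∧ ⋃₀ 𝒱 = Set.univ

/-- The weight of X is at most κ: there is a base of size ≤ κ. -/
def WeightLE (X : Type u) [TopologicalSpace X] (κ : Cardinal.{u}) : Prop :=
  ∃ B : Set (Set X), TopologicalSpace.IsTopologicalBasis B ∧ #B ≤ κ

/-- N is a network for X. -/
def IsNetwork (X : Type u) [TopologicalSpace X] (N : Set (Set X)) : Prop :=
  ∀ (x : X) (U : Set X), IsOpen U → x ∈ U → ∃ n ∈ N, x ∈ n ∧ n ⊆ U

/-- X is linearly Lindelöf: regular (incl. T1) and every open cover linearly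
ordered by inclusion has a countable subcover. -/
def LinearlyLindelofSp (X : Type u) [TopologicalSpace X] : Prop :=
  RegularSpace X ∧ T1Space X ∧
    ∀ 𝒰 : Set (Set X), (∀ U ∈ 𝒰, IsOpen U) → IsChain (· ⊆ ·) 𝒰 → ⋃₀ 𝒰 = Set.univ →
      ∃ 𝒱 ⊆ 𝒰, 𝒱.Countable ∧ ⋃₀ 𝒱 = Set.univ

/-- U ⊆ X^ω is a basic open set: a product of open sets, all but finitely many of
which equal X. -/
def IsBasicOpen (X : Type u) [TopologicalSpace X] (U : Set (ℕ → X)) : Prop :=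
  ∃ V : ℕ → Set X, (∀ i, IsOpen (V i)) ∧ {i | V i ≠ Set.univ}.Finite ∧
    U = Set.pi Set.univ V

/-- A family of subsets of Z is point-κ if every point belongs to at most κ members. -/
def PointLE {Z : Type u} (𝒲 : Set (Set Z)) (κ : Cardinal.{u}) : Prop :=
  ∀ z : Z, #({W ∈ 𝒲 | z ∈ W}) ≤ κ

/-- A non-empty space is zero-dimensional if it is T1 and has a base of clopen sets. -/
def ZeroDimensionalSp (Y : Type u) [TopologicalSpace Y] : Prop :=
  Nonempty Y ∧ T1Space Y ∧
    ∃ B : Set (Set Y), TopologicalSpace.IsTopologicalBasis B ∧ ∀ b ∈ B, IsClopen b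

/-!
Countable powers of Alster spaces are Lindelöf. Under CH, an open cover of `ℕ → X` only involves the
image of `X` in a cube, and this image is an Alster space.

*From products to k-covers.* Let `S` be a productively Lindelöf subspace of a product of at most
`𝔠 = ℵ₁` compact metrizable spaces. It is Alster as soon as every k-cover of `S` by closed sets with
countable support has a countable subcover. There are only `ℵ₁` such sets, so let the cover be
`Z γ`, `γ < ω₁`. Let `B` collect, for each `β`, the points outside `⋃ γ < β, Z γ` that differ from
every point of `S` below `β`. If no `⋃ γ < β, Z γ` contained `S`, points `x α` of `S` outside these
unions could be added to `B` as isolated points; the resulting space is Lindelöf, but its product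
with `S` contains an uncountable closed discrete set. Lindelöfness amounts to the fact that every
closed set missing `B` is covered by countably many `Z γ`. It follows from the Baire category
theorem, applied to the projection of the uncovered part of the closed set onto the first `l`
coordinates, for a closure point `l < ω₁`.

*Powers.* If a cover of `ℕ → X` by basic open sets has no countable subcover, compact sets `L n` can
be chosen one coordinate at a time so that no cylinder over `L 0 × ⋯ × L n` is countably covered.
This contradicts the compactness of `∏ n, L n`.

*Networks.* A basic neighborhood of a point of `ℕ → X` is cut out by finitely many continuous
functions `X → [0, 1]`, and these may be chosen as a function of a sequence of members of the
network. A given open cover therefore involves only `𝔠` functions, which map `X` into a cube of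
weight `ℵ₁`.
-/

/-! ### Countable subcovers and productively Lindelöf spaces -/

/-- `A` is covered by countably many members of the family `𝒰`. The members of `𝒰` need not be
open; the notion is used to compare covers by open, closed and `Gδ` sets. -/
def CountablyCovered {X : Type*} (𝒰 : Set (Set X)) (A : Set X) : Prop :=
  ∃ 𝒱 ⊆ 𝒰, 𝒱.Countable ∧ A ⊆ ⋃₀ 𝒱

namespace CountablyCovered

variable {X : Type*} {𝒰 𝒱 : Set (Set X)} {A B : Set X}

theorem mono (hB : CountablyCovered 𝒰 B) (hAB : A ⊆ B) : CountablyCovered 𝒰 A := by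
  obtain ⟨𝒱, h𝒱𝒰, h𝒱, hB𝒱⟩ := hB
  exact ⟨𝒱, h𝒱𝒰, h𝒱, hAB.trans hB𝒱⟩

theorem of_subset_mem {U : Set X} (hU : U ∈ 𝒰) (hAU : A ⊆ U) : CountablyCovered 𝒰 A :=
  ⟨{U}, singleton_subset_iff.2 hU, countable_singleton U, by rwa [sUnion_singleton]⟩

theorem sUnion {𝒜 : Set (Set X)} (h𝒜 : 𝒜.Countable) (h : ∀ A ∈ 𝒜, CountablyCovered 𝒰 A) :
    CountablyCovered 𝒰 (⋃₀ 𝒜) := by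
  choose! 𝒱 h𝒱𝒰 h𝒱 hA𝒱 using h
  refine ⟨⋃ A ∈ 𝒜, 𝒱 A, iUnion₂_subset h𝒱𝒰, h𝒜.biUnion h𝒱, sUnion_subset fun A hA ↦ ?_⟩
  exact (hA𝒱 A hA).trans (sUnion_subset_sUnion (subset_biUnion_of_mem hA))

theorem union (hA : CountablyCovered 𝒰 A) (hB : CountablyCovered 𝒰 B) :
    CountablyCovered 𝒰 (A ∪ B) := by
  rw [← sUnion_pair]
  exact CountablyCovered.sUnion (countable_insert.2 (countable_singleton B)) (by
    rintro _ (rfl | rfl)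
    exacts [hA, hB])

theorem trans (hA : CountablyCovered 𝒱 A) (h𝒱 : ∀ V ∈ 𝒱, CountablyCovered 𝒰 V) :
    CountablyCovered 𝒰 A := by
  obtain ⟨𝒲, h𝒲𝒱, h𝒲, hA𝒲⟩ := hA
  exact (CountablyCovered.sUnion h𝒲 fun V hV ↦ h𝒱 V (h𝒲𝒱 hV)).mono hA𝒲

theorem of_refinement (hA : CountablyCovered 𝒱 A) (h : ∀ V ∈ 𝒱, ∃ U ∈ 𝒰, V ⊆ U) :
    CountablyCovered 𝒰 A :=
  hA.trans fun V hV ↦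
    let ⟨_, hU, hVU⟩ := h V hV
    of_subset_mem hU hVU

theorem preimage {Y : Type*} (hA : CountablyCovered 𝒰 A) (f : Y → X) :
    CountablyCovered ((f ⁻¹' ·) '' 𝒰) (f ⁻¹' A) := by
  obtain ⟨𝒱, h𝒱𝒰, h𝒱, hA𝒱⟩ := hA
  refine ⟨_, image_mono h𝒱𝒰, h𝒱.image _, fun y hy ↦ ?_⟩
  obtain ⟨V, hV, hyV⟩ := hA𝒱 hy
  exact ⟨_, mem_image_of_mem _ hV, hyV⟩

theorem of_isLindelof [TopologicalSpace X] (hA : IsLindelof A)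
    (h : ∀ x ∈ A, ∃ t ∈ 𝓝[A] x, CountablyCovered 𝒰 t) : CountablyCovered 𝒰 A :=
  hA.induction_on (fun _ _ hst ht ↦ ht.mono hst) (fun _ hS ↦ CountablyCovered.sUnion hS) h

end CountablyCovered

theorem isLindelof_iff_countablyCovered {X : Type*} [TopologicalSpace X] {A : Set X} :
    IsLindelof A ↔
      ∀ 𝒰 : Set (Set X), (∀ U ∈ 𝒰, IsOpen U) → A ⊆ ⋃₀ 𝒰 → CountablyCovered 𝒰 A := by
  constructor
  · intro hA 𝒰 h𝒰 hA𝒰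
    refine .of_isLindelof hA fun x hx ↦ ?_
    obtain ⟨U, hU, hxU⟩ := hA𝒰 hx
    exact ⟨U, mem_nhdsWithin_of_mem_nhds ((h𝒰 U hU).mem_nhds hxU),
      .of_subset_mem hU Subset.rfl⟩
  · intro h
    refine isLindelof_of_countable_subcover fun U hU hAU ↦ ?_
    obtain ⟨𝒱, h𝒱U, h𝒱, hA𝒱⟩ := h (range U) (forall_mem_range.2 hU) hAU
    choose i hi using h𝒱U
    have := h𝒱.to_subtype
    refine ⟨range fun V : 𝒱 ↦ i V.2, countable_range _, ?_⟩
    simpa only [biUnion_range, hi, ← sUnion_eq_iUnion] using hA𝒱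

theorem CountablyCovered.of_surjective_lindelofSpace {Y Z : Type*} [TopologicalSpace Z]
    [LindelofSpace Z] {g : Y → Z} (hg : Function.Surjective g) {𝒰 : Set (Set Y)}
    (h : ∀ y, ∃ W, IsOpen W ∧ g y ∈ W ∧ ∃ U ∈ 𝒰, g ⁻¹' W ⊆ U) :
    CountablyCovered 𝒰 univ := by
  let 𝒲 : Set (Set Z) := {W | IsOpen W ∧ ∃ U ∈ 𝒰, g ⁻¹' W ⊆ U}
  have h𝒲 : Set.univ ⊆ ⋃₀ 𝒲 := fun z _ ↦ by
    obtain ⟨y, rfl⟩ := hg z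
    obtain ⟨W, hW, hyW, hWU⟩ := h y
    exact ⟨W, ⟨hW, hWU⟩, hyW⟩
  have h𝒲c : CountablyCovered 𝒲 Set.univ :=
    isLindelof_iff_countablyCovered.1 isLindelof_univ 𝒲 (fun _ hW ↦ hW.1) h𝒲
  exact (h𝒲c.preimage g).of_refinement (forall_mem_image.2 fun W hW ↦ hW.2)

theorem quasiLindelofSp_iff_lindelofSpace {X : Type u} [TopologicalSpace X] :
    QuasiLindelofSp X ↔ LindelofSpace X := by
  rw [← isLindelof_univ_iff, isLindelof_iff_countablyCovered]
  simp only [QuasiLindelofSp, CountablyCovered, univ_subset_iff]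

theorem isLindelof_preimage_of_isProperMap {X Y : Type*} [TopologicalSpace X] [TopologicalSpace Y]
    {f : X → Y} (hf : IsProperMap f) {A : Set Y} (hA : IsLindelof A) : IsLindelof (f ⁻¹' A) := by
  intro ℱ _ _ hℱA
  obtain ⟨y, hyA, hy⟩ := hA (Filter.map_le_iff_le_comap.2 (by simpa using hℱA))
  obtain ⟨x, rfl, hx⟩ := hf.clusterPt_of_mapClusterPt hy
  exact ⟨x, hyA, hx⟩

namespace ProductivelyQuasiLindelofSp

variable {X : Type u} [TopologicalSpace X]

theorem lindelofSpace_prod (hX : ProductivelyQuasiLindelofSp X) (Y : Type u) [TopologicalSpace Y]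
    [T3Space Y] [LindelofSpace Y] : LindelofSpace (X × Y) :=
  quasiLindelofSp_iff_lindelofSpace.1 <| hX Y
    ⟨inferInstance, inferInstance, quasiLindelofSp_iff_lindelofSpace.2 inferInstance⟩

theorem lindelofSpace (hX : ProductivelyQuasiLindelofSp X) : LindelofSpace X := by
  have := hX.lindelofSpace_prod PUnit
  exact (Homeomorph.prodPUnit X).symm.isClosedEmbedding.LindelofSpace

theorem of_surjective {Z : Type u} [TopologicalSpace Z] (hX : ProductivelyQuasiLindelofSp X)
    {f : X → Z} (hf : Continuous f) (hfs : Function.Surjective f) :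
    ProductivelyQuasiLindelofSp Z := by
  intro Y _ hY
  have := quasiLindelofSp_iff_lindelofSpace.1 (hX Y hY)
  exact quasiLindelofSp_iff_lindelofSpace.2 <|
    .of_continuous_surjective (hf.prodMap continuous_id) (hfs.prodMap Function.surjective_id)

end ProductivelyQuasiLindelofSp

namespace ProductivelyLindelofSp

variable {X : Type u} [TopologicalSpace X]

theorem productivelyQuasiLindelofSp (hX : ProductivelyLindelofSp X) :
    ProductivelyQuasiLindelofSp X :=
  fun Y _ hY ↦ (hX Y hY).2.2

theorem t3Space (hX : ProductivelyLindelofSp X) : T3Space X := by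
  have hunit : EngLindelofSp PUnit.{u + 1} :=
    ⟨inferInstance, inferInstance, quasiLindelofSp_iff_lindelofSpace.2 inferInstance⟩
  obtain ⟨_, _, -⟩ := hX PUnit hunit
  exact (Homeomorph.prodPUnit X).symm.isEmbedding.t3Space

end ProductivelyLindelofSp

/-! ### The order type `ω₁` -/

/-- A linear order behaving like `ω₁` with regard to countability: an uncountable well-order with
countable initial segments. -/
class IsOmegaOne (Ω : Type*) [LinearOrder Ω] : Prop extends WellFoundedLT Ω, Uncountable Ω where
  countable_Iio : ∀ a : Ω, (Iio a).Countable

namespace IsOmegaOne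

instance toType_ord_aleph_one : IsOmegaOne (ℵ_ 1).ord.ToType where
  toUncountable := by
    rw [← aleph0_lt_mk_iff, mk_ord_toType]
    exact aleph0_lt_aleph_one
  countable_Iio a := by
    have h : #(Iio a) < ℵ_ 1 := by simpa using Cardinal.mk_Iio_lt a
    rw [← le_aleph0_iff_set_countable, ← Order.lt_succ_iff, succ_aleph0]
    exact h

theorem exists_range_eq {Ω T : Type u} [LinearOrder Ω] [IsOmegaOne Ω] {A : Set T}
    (hne : A.Nonempty) (hA : #A ≤ ℵ₁) : ∃ f : Ω → T, range f = A := by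
  have := hne.to_subtype
  have hAΩ : #A ≤ #Ω := hA.trans (aleph_one_le_iff.2 (aleph0_lt_mk_iff.2 inferInstance))
  obtain ⟨e⟩ := Cardinal.le_def .. |>.1 hAΩ
  refine ⟨Subtype.val ∘ Function.invFun e, ?_⟩
  rw [(Function.invFun_surjective e.injective).range_comp, Subtype.range_val]

variable {Ω : Type*} [LinearOrder Ω] [IsOmegaOne Ω]

theorem exists_forall_lt_of_countable {A : Set Ω} (hA : A.Countable) : ∃ b, ∀ a ∈ A, a < b := by
  by_contra! h
  refine not_countable_univ (α := Ω) (.mono (fun b _ ↦ ?_) (hA.biUnion fun a _ ↦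
    (countable_Iio a).union (countable_singleton a)))
  obtain ⟨a, ha, hba⟩ := h b
  exact mem_biUnion ha hba.lt_or_eq

theorem exists_forall_lt {ι : Sort*} [Countable ι] (f : ι → Ω) : ∃ b, ∀ i, f i < b := by
  simpa only [forall_mem_range] using exists_forall_lt_of_countable (countable_range f)

instance : Nonempty Ω :=
  ⟨(exists_forall_lt_of_countable (Ω := Ω) countable_empty).choose⟩

/-- The point `l` is the supremum of a sequence `c` with `g (c n) < c (n + 1)`. -/
theorem exists_closure_point (g : Ω → Ω) :
    ∃ l, ∀ I : Finset Ω, (∀ i ∈ I, i < l) → ∃ c < l, g c < l ∧ ∀ i ∈ I, i < c := by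
  have hstep (a : Ω) : ∃ b, a < b ∧ g a < b := by
    obtain ⟨b, hb⟩ := exists_forall_lt_of_countable (A := {a, g a}) (toFinite _).countable
    exact ⟨b, hb a (by simp), hb (g a) (by simp)⟩
  choose h hlt hglt using hstep
  let c (n : ℕ) : Ω := h^[n] (Classical.arbitrary Ω)
  have hc (n : ℕ) : c (n + 1) = h (c n) := Function.iterate_succ_apply' ..
  have hgc (n : ℕ) : g (c n) < c (n + 1) := hc n ▸ hglt (c n)
  have hmono : StrictMono c := strictMono_nat_of_lt_succ fun n ↦ hc n ▸ hlt (c n)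
  obtain ⟨l, hcl, hmin⟩ := WellFounded.has_min (wellFounded_lt (α := Ω)) {b | ∀ n, c n < b}
    (exists_forall_lt c)
  have hbelow (i : Ω) (hi : i < l) : ∃ n, i < c (n + 1) := by
    by_contra! hle
    exact hmin i (fun n ↦ (hmono n.lt_succ_self).trans_le (hle n)) hi
  refine ⟨l, fun I hI ↦ ?_⟩
  choose! n hn using fun i hi ↦ hbelow i (hI i hi)
  refine ⟨c (I.sup n + 1), hcl _, (hgc _).trans (hcl _), ?_⟩
  exact fun i hi ↦ (hn i hi).trans_le (hmono.monotone (by gcongr; exact Finset.le_sup hi))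

end IsOmegaOne

/-- The union of the sets `Z γ` with `γ < β`; the inequality is strict, so that countable
supports bounded by `β` can be read off the indices. -/
def initialUnion {Ω X : Type*} [LinearOrder Ω] (Z : Ω → Set X) (β : Ω) : Set X :=
  ⋃ γ ∈ Iio β, Z γ

section InitialUnion

variable {Ω X : Type*} [LinearOrder Ω] (Z : Ω → Set X)

theorem monotone_initialUnion : Monotone (initialUnion Z) :=
  fun _ _ h ↦ biUnion_subset_biUnion_left (Iio_subset_Iio h)

theorem countablyCovered_range_iff [IsOmegaOne Ω] {A : Set X} :
    CountablyCovered (range Z) A ↔ ∃ β, A ⊆ initialUnion Z β := by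
  constructor
  · rintro ⟨𝒱, h𝒱Z, h𝒱, hA⟩
    have := h𝒱.to_subtype
    choose γ hγ using fun V : 𝒱 ↦ h𝒱Z V.2
    obtain ⟨β, hβ⟩ := IsOmegaOne.exists_forall_lt γ
    refine ⟨β, hA.trans (sUnion_subset fun V hV ↦ ?_)⟩
    exact (hγ ⟨V, hV⟩).ge.trans (subset_biUnion_of_mem (u := Z) (hβ ⟨V, hV⟩))
  · rintro ⟨β, hA⟩
    exact ⟨Z '' Iio β, image_subset_range .., (IsOmegaOne.countable_Iio β).image Z,
      by rwa [sUnion_image]⟩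

end InitialUnion

/-! ### The Michael construction -/

section Michael

variable {K Ω : Type*} [TopologicalSpace K] [TopologicalSpace Ω] [DiscreteTopology Ω]

theorem exists_countable_forall_prod_singleton_subset {A : Set K} (hA : IsLindelof A)
    {W : Set (K × OnePoint Ω)} (hW : IsOpen W) (hAW : A ×ˢ {OnePoint.infty} ⊆ W) :
    ∃ E : Set Ω, E.Countable ∧ ∀ α ∉ E, A ×ˢ {(α : OnePoint Ω)} ⊆ W := by
  have hL : IsLindelof (Prod.fst ⁻¹' A \ W) :=
    (isLindelof_preimage_of_isProperMap isProperMap_fst_of_compactSpace hA).diff hW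
  let E : Set Ω := {α | (α : OnePoint Ω) ∈ Prod.snd '' (Prod.fst ⁻¹' A \ W)}
  have himage : Prod.snd '' (Prod.fst ⁻¹' A \ W) = ((↑) : Ω → OnePoint Ω) '' E := by
    refine (image_preimage_eq_of_subset ?_).symm
    rintro _ ⟨⟨y, p⟩, ⟨hy, hyW⟩, rfl⟩
    exact OnePoint.ne_infty_iff_exists.1 fun hp ↦ hyW (hAW ⟨hy, hp⟩)
  have hE : IsLindelof E :=
    OnePoint.isOpenEmbedding_coe.isEmbedding.isLindelof_iff.2 (himage ▸ hL.image continuous_snd)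
  refine ⟨E, isLindelof_iff_countable.1 hE, fun α hα ↦ ?_⟩
  rintro ⟨y, _⟩ ⟨hy, rfl⟩
  by_contra hyW
  exact hα ⟨(y, α), ⟨hy, hyW⟩, rfl⟩

/-- The Michael construction: the points of `B` keep their neighborhoods, placed at `∞`, and the
points `x α` are added as isolated ones. -/
def michaelSet (B : Set K) (x : Ω → K) : Set (K × OnePoint Ω) :=
  B ×ˢ {OnePoint.infty} ∪ range fun α ↦ (x α, (α : OnePoint Ω))

theorem isLindelof_michaelSet [LinearOrder Ω] [IsOmegaOne Ω] {B : Set K} {N : Ω → Set K}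
    (hN : Monotone N) (hBN : ∀ β, IsLindelof (B ∩ N β)) (hNc : ∀ β, IsLindelof (N β)ᶜ)
    (hclosed : ∀ D : Set K, IsClosed D → Disjoint D B → ∃ β, D ⊆ N β)
    {x : Ω → K} (hx : ∀ α, x α ∉ N α) : IsLindelof (michaelSet B x) := by
  rw [isLindelof_iff_countablyCovered]
  intro 𝒰 h𝒰 hcov
  have hDo : IsOpen {y : K | (y, OnePoint.infty) ∈ ⋃₀ 𝒰} :=
    (isOpen_sUnion h𝒰).preimage (Continuous.prodMk_left _)
  obtain ⟨β, hβ⟩ := hclosed {y | (y, OnePoint.infty) ∈ ⋃₀ 𝒰}ᶜ hDo.isClosed_compl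
    (disjoint_left.2 fun y hy hyB ↦ hy (hcov (.inl ⟨hyB, rfl⟩)))
  have hslice {A : Set K} (hA : IsLindelof A) :
      IsLindelof (A ×ˢ {(OnePoint.infty : OnePoint Ω)}) := by
    rw [prod_singleton]
    exact hA.image (Continuous.prodMk_left _)
  obtain ⟨𝒱, h𝒱𝒰, h𝒱, hN𝒱⟩ := isLindelof_iff_countablyCovered.1 (hslice (hNc β)) 𝒰 h𝒰 (by
    rintro ⟨y, _⟩ ⟨hy, rfl⟩
    exact not_notMem.1 fun h ↦ hy (hβ h))
  obtain ⟨E, hE, hEW⟩ := exists_countable_forall_prod_singleton_subset (hNc β)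
    (isOpen_sUnion fun V hV ↦ h𝒰 V (h𝒱𝒰 hV)) hN𝒱
  have hrest : CountablyCovered 𝒰 ((B ∩ N β) ×ˢ {OnePoint.infty} ∪
      (fun α ↦ (x α, (α : OnePoint Ω))) '' (E ∪ Iio β)) := by
    refine isLindelof_iff_countablyCovered.1 ((hslice (hBN β)).union
      ((hE.union (IsOmegaOne.countable_Iio β)).image _).isLindelof) 𝒰 h𝒰 ?_
    exact (union_subset_union (prod_mono inter_subset_left Subset.rfl)
      (image_subset_range ..)).trans hcov
  refine (CountablyCovered.union ⟨𝒱, h𝒱𝒰, h𝒱, Subset.rfl⟩ hrest).mono ?_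
  rintro _ (⟨hyB, hy⟩ | ⟨α, rfl⟩)
  · exact (em _).elim (fun hyN ↦ .inr (.inl ⟨⟨hyB, hyN⟩, hy⟩)) (fun hyN ↦ .inl (hN𝒱 ⟨hyN, hy⟩))
  · by_cases hα : α ∈ E ∪ Iio β
    · exact .inr (.inr (mem_image_of_mem _ hα))
    · rw [mem_union, not_or] at hα
      exact .inl (hEW α hα.1 ⟨fun h ↦ hx α (hN (not_lt.1 hα.2) h), rfl⟩)

theorem not_lindelofSpace_prod_michaelSet [T2Space K] [Uncountable Ω] {S B : Set K}
    (hSB : Disjoint S B) {x : Ω → K} (hxS : ∀ α, x α ∈ S) :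
    ¬ LindelofSpace (S × michaelSet B x) := by
  intro _
  let Δ : Set (S × michaelSet B x) := {q | (q.1 : K) = q.2.1.1}
  have hΔ : IsClosed Δ := isClosed_eq (by fun_prop) (by fun_prop)
  have himage : (fun q : S × michaelSet B x ↦ q.2.1.2) '' Δ = ((↑) : Ω → OnePoint Ω) '' univ := by
    refine Subset.antisymm ?_ ?_
    · rintro _ ⟨⟨s, ⟨y, hy⟩⟩, hsy : (s : K) = y.1, rfl⟩
      rcases hy with ⟨hyB, -⟩ | ⟨α, rfl⟩
      · exact absurd hyB (hsy ▸ disjoint_left.1 hSB s.2)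
      · exact mem_image_of_mem _ (mem_univ α)
    · rintro _ ⟨α, -, rfl⟩
      exact ⟨(⟨x α, hxS α⟩, ⟨_, .inr (mem_range_self α)⟩), rfl, rfl⟩
  have hL : IsLindelof (univ : Set Ω) :=
    OnePoint.isOpenEmbedding_coe.isEmbedding.isLindelof_iff.2
      (himage ▸ hΔ.isLindelof.image (by fun_prop))
  exact not_countable_univ (isLindelof_iff_countable.1 hL)

end Michael

theorem exists_subset_of_productivelyQuasiLindelofSp {K Ω : Type u} [TopologicalSpace K]
    [T3Space K] [LinearOrder Ω] [IsOmegaOne Ω] {S B : Set K} (hS : ProductivelyQuasiLindelofSp S)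
    (hSB : Disjoint S B) {N : Ω → Set K} (hN : Monotone N) (hBN : ∀ β, IsLindelof (B ∩ N β))
    (hNc : ∀ β, IsLindelof (N β)ᶜ)
    (hclosed : ∀ D : Set K, IsClosed D → Disjoint D B → ∃ β, D ⊆ N β) : ∃ β, S ⊆ N β := by
  by_contra! hSN
  choose x hxS hxN using fun α ↦ not_subset.1 (hSN α)
  let _ : TopologicalSpace Ω := ⊥
  have : DiscreteTopology Ω := ⟨rfl⟩
  have := isLindelof_iff_lindelofSpace.1 (isLindelof_michaelSet hN hBN hNc hclosed hxN)
  exact not_lindelofSpace_prod_michaelSet hSB hxS (hS.lindelofSpace_prod _)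

theorem mk_isClosed_le_continuum (M : Type*) [TopologicalSpace M] [SecondCountableTopology M] :
    #{C : Set M | IsClosed C} ≤ 𝔠 := by
  let b := TopologicalSpace.countableBasis M
  have hb : borel M = .generateFrom b :=
    (TopologicalSpace.isBasis_countableBasis M).borel_eq_generateFrom
  calc #{C : Set M | IsClosed C} ≤ #{C | @MeasurableSet M (.generateFrom b) C} :=
        mk_le_mk_of_subset fun C hC ↦ by
          rw [mem_ofPred_eq, ← hb]
          exact .of_compl (.basic _ hC.isOpen_compl)
    _ ≤ 𝔠 := MeasurableSpace.cardinal_measurableSet_le_continuum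
        ((TopologicalSpace.countable_countableBasis M).le_aleph0.trans aleph0_le_continuum)

theorem isSigmaCompact_of_productivelyQuasiLindelofSp {M : Type u} [TopologicalSpace M]
    [CompactSpace M] [T2Space M] [SecondCountableTopology M]
    (hCH : (𝔠 : Cardinal.{u}) = ℵ₁) {S : Set M} (hS : ProductivelyQuasiLindelofSp S) :
    IsSigmaCompact S := by
  let 𝒞 : Set (Set M) := {C | IsClosed C ∧ C ⊆ S}
  obtain ⟨Z, hZ⟩ := IsOmegaOne.exists_range_eq (Ω := (ℵ₁ : Cardinal.{u}).ord.ToType) (A := 𝒞)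
    ⟨∅, isClosed_empty, empty_subset S⟩
    (hCH ▸ (mk_le_mk_of_subset fun _ hC ↦ hC.1).trans (mk_isClosed_le_continuum M))
  obtain ⟨𝒱, h𝒱𝒞, h𝒱, hS𝒱⟩ : CountablyCovered 𝒞 S := by
    rw [← hZ, countablyCovered_range_iff]
    refine exists_subset_of_productivelyQuasiLindelofSp hS disjoint_compl_right
      (monotone_initialUnion Z) (fun _ ↦ HereditarilyLindelofSpace.isLindelof _)
      (fun _ ↦ HereditarilyLindelofSpace.isLindelof _) fun D hD hDS ↦ ?_
    rw [← countablyCovered_range_iff, hZ]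
    exact .of_subset_mem ⟨hD, disjoint_compl_right_iff_subset.1 hDS⟩ Subset.rfl
  have hS_eq : S = ⋃₀ 𝒱 := hS𝒱.antisymm (sUnion_subset fun C hC ↦ (h𝒱𝒞 hC).2)
  exact hS_eq ▸ isSigmaCompact_sUnion_of_isCompact h𝒱 fun C hC ↦ (h𝒱𝒞 hC).1.isCompact

/-! ### Sets supported on few coordinates -/

section Support

variable {ι : Type*} {π : ι → Type*}

/-- The set `T` in a product is determined by the coordinates in `J`. -/
def IsSupportedOn (T : Set (∀ i, π i)) (J : Set ι) : Prop :=
  DependsOn (· ∈ T) J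

/-- The set `T` in a product is determined by countably many coordinates. -/
def CountablySupported (T : Set (∀ i, π i)) : Prop :=
  ∃ J : Set ι, J.Countable ∧ IsSupportedOn T J

namespace IsSupportedOn

variable {T : Set (∀ i, π i)} {J J' : Set ι}

theorem mem_of_mem {x y : ∀ i, π i} (hT : IsSupportedOn T J) (hxy : ∀ i ∈ J, x i = y i)
    (hx : x ∈ T) : y ∈ T :=
  (hT hxy).mp hx

theorem mono (hT : IsSupportedOn T J) (hJ : J ⊆ J') : IsSupportedOn T J' :=
  DependsOn.mono hJ hT

theorem preimage_domRestrict (V : Set (∀ i : J, π i)) : IsSupportedOn (J.domRestrict ⁻¹' V) J :=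
  fun _ _ hxy ↦ congrArg (· ∈ V) (dependsOn_domRestrict J hxy)

theorem compl (hT : IsSupportedOn T J) : IsSupportedOn Tᶜ J :=
  fun _ _ hxy ↦ congrArg Not (hT hxy)

theorem iUnion {κ : Sort*} {T : κ → Set (∀ i, π i)} (hT : ∀ k, IsSupportedOn (T k) J) :
    IsSupportedOn (⋃ k, T k) J := by
  intro x y hxy
  simp only [mem_iUnion]
  exact congrArg _ (funext fun k ↦ hT k hxy)

theorem union {S : Set (∀ i, π i)} (hS : IsSupportedOn S J) (hT : IsSupportedOn T J) :
    IsSupportedOn (S ∪ T) J := by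
  rw [union_eq_iUnion]
  exact .iUnion (Bool.rec hT hS)

end IsSupportedOn

/-- The set of points agreeing on `J` with some point of `S`: the least set containing `S` that is
supported on `J`. -/
def cylinderHull (J : Set ι) (S : Set (∀ i, π i)) : Set (∀ i, π i) :=
  J.domRestrict ⁻¹' (J.domRestrict '' S)

theorem mem_cylinderHull {J : Set ι} {S : Set (∀ i, π i)} {y : ∀ i, π i} :
    y ∈ cylinderHull J S ↔ ∃ s ∈ S, ∀ i ∈ J, s i = y i := by
  simp only [cylinderHull, mem_preimage, mem_image, funext_iff, domRestrict_apply, Subtype.forall]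

theorem isSupportedOn_cylinderHull (J : Set ι) (S : Set (∀ i, π i)) :
    IsSupportedOn (cylinderHull J S) J :=
  IsSupportedOn.preimage_domRestrict _

theorem subset_cylinderHull (J : Set ι) (S : Set (∀ i, π i)) : S ⊆ cylinderHull J S :=
  subset_preimage_image _ _

theorem cylinderHull_antitone (S : Set (∀ i, π i)) : Antitone (cylinderHull · S) := by
  intro J J' hJ y hy
  obtain ⟨s, hs, hsy⟩ := mem_cylinderHull.1 hy
  exact mem_cylinderHull.2 ⟨s, hs, fun i hi ↦ hsy i (hJ hi)⟩

theorem IsSupportedOn.cylinderHull_eq {T : Set (∀ i, π i)} {J : Set ι} (hT : IsSupportedOn T J) :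
    cylinderHull J T = T := by
  refine (subset_cylinderHull J T).antisymm' fun y hy ↦ ?_
  obtain ⟨s, hs, hsy⟩ := mem_cylinderHull.1 hy
  exact hT.mem_of_mem hsy hs

namespace CountablySupported

theorem compl {T : Set (∀ i, π i)} (hT : CountablySupported T) : CountablySupported Tᶜ := by
  obtain ⟨J, hJ, hTJ⟩ := hT
  exact ⟨J, hJ, hTJ.compl⟩

theorem iUnion {κ : Sort*} [Countable κ] {T : κ → Set (∀ i, π i)}
    (hT : ∀ k, CountablySupported (T k)) : CountablySupported (⋃ k, T k) := by
  choose J hJ hTJ using hT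
  exact ⟨⋃ k, J k, countable_iUnion hJ, .iUnion fun k ↦ (hTJ k).mono (subset_iUnion J k)⟩

theorem biUnion {κ : Type*} {s : Set κ} (hs : s.Countable) {T : κ → Set (∀ i, π i)}
    (hT : ∀ k ∈ s, CountablySupported (T k)) : CountablySupported (⋃ k ∈ s, T k) := by
  have := hs.to_subtype
  rw [biUnion_eq_iUnion]
  exact .iUnion fun k ↦ hT k k.2

theorem union {S T : Set (∀ i, π i)} (hS : CountablySupported S) (hT : CountablySupported T) :
    CountablySupported (S ∪ T) := by
  rw [union_eq_iUnion]
  exact .iUnion (Bool.rec hT hS)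

theorem inter {S T : Set (∀ i, π i)} (hS : CountablySupported S) (hT : CountablySupported T) :
    CountablySupported (S ∩ T) := by
  simpa only [compl_union, compl_compl] using (hS.compl.union hT.compl).compl

theorem exists_isSupportedOn_Iio {Ω : Type*} [LinearOrder Ω] [IsOmegaOne Ω] {π : Ω → Type*}
    {T : Set (∀ a, π a)} (hT : CountablySupported T) : ∃ l, IsSupportedOn T (Iio l) := by
  obtain ⟨J, hJ, hTJ⟩ := hT
  obtain ⟨l, hl⟩ := IsOmegaOne.exists_forall_lt_of_countable hJ
  exact ⟨l, hTJ.mono hl⟩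

theorem isLindelof [∀ i, TopologicalSpace (π i)] [∀ i, CompactSpace (π i)] [∀ i, T2Space (π i)]
    [∀ i, SecondCountableTopology (π i)] {T : Set (∀ i, π i)} (hT : CountablySupported T) :
    IsLindelof T := by
  obtain ⟨J, hJ, hTJ⟩ := hT
  have := hJ.to_subtype
  rw [← hTJ.cylinderHull_eq]
  exact isLindelof_preimage_of_isProperMap (Pi.continuous_domRestrict J).isProperMap
    (HereditarilyLindelofSpace.isLindelof _)

end CountablySupported

variable [∀ i, TopologicalSpace (π i)]

theorem exists_isOpen_preimage_domRestrict_eq {J : Set ι} {U : Set (∀ i, π i)} (hU : IsOpen U)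
    (hUJ : IsSupportedOn U J) : ∃ V : Set (∀ i : J, π i), IsOpen V ∧ J.domRestrict ⁻¹' V = U := by
  classical
  rcases U.eq_empty_or_nonempty with rfl | ⟨y, -⟩
  · exact ⟨∅, isOpen_empty, preimage_empty⟩
  let extend (v : ∀ i : J, π i) (i : ι) : π i := if h : i ∈ J then v ⟨i, h⟩ else y i
  have hextend : Continuous extend := continuous_pi fun i ↦ by
    by_cases h : i ∈ J
    · simpa only [extend, dif_pos h] using continuous_apply _
    · simpa only [extend, dif_neg h] using continuous_const
  refine ⟨extend ⁻¹' U, hU.preimage hextend, ext fun x ↦ ?_⟩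
  exact iff_of_eq (hUJ fun i hi ↦ dif_pos hi)

theorem exists_isClosed_preimage_domRestrict_eq {J : Set ι} {T : Set (∀ i, π i)} (hT : IsClosed T)
    (hTJ : IsSupportedOn T J) : ∃ C : Set (∀ i : J, π i), IsClosed C ∧ J.domRestrict ⁻¹' C = T := by
  obtain ⟨V, hV, hVT⟩ := exists_isOpen_preimage_domRestrict_eq hT.isOpen_compl hTJ.compl
  exact ⟨Vᶜ, hV.isClosed_compl, by rw [preimage_compl, hVT, compl_compl]⟩

theorem exists_finset_isOpen_isSupportedOn {J : Set ι} {U : Set (∀ i, π i)} (hU : IsOpen U)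
    (hUJ : IsSupportedOn U J) {y : ∀ i, π i} (hy : y ∈ U) :
    ∃ I : Finset ι, ↑I ⊆ J ∧ ∃ W, IsOpen W ∧ IsSupportedOn W I ∧ y ∈ W ∧ W ⊆ U := by
  obtain ⟨V, hV, rfl⟩ := exists_isOpen_preimage_domRestrict_eq hU hUJ
  obtain ⟨I, u, hu, hIV⟩ := isOpen_pi_iff.1 hV _ hy
  refine ⟨I.map (.subtype _), by simp, J.domRestrict ⁻¹' (I : Set J).pi u, ?_, ?_,
    fun i hi ↦ (hu i hi).2, preimage_mono hIV⟩
  · exact (isOpen_set_pi I.finite_toSet fun i hi ↦ (hu i hi).1).preimage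
      (Pi.continuous_domRestrict J)
  · intro x z hxz
    have hxz' : ∀ i ∈ I, x i = z i := fun i hi ↦ hxz i (by simpa using hi)
    exact propext (forall₂_congr fun i hi ↦ by
      rw [domRestrict_apply, domRestrict_apply, hxz' i hi])

theorem exists_countable_basis_isSupportedOn [∀ i, SecondCountableTopology (π i)] {J : Set ι}
    (hJ : J.Countable) : ∃ 𝔅 : Set (Set (∀ i, π i)), 𝔅.Countable ∧ (∀ W ∈ 𝔅, IsOpen W) ∧
      ∀ U, IsOpen U → IsSupportedOn U J → ∀ y ∈ U, ∃ W ∈ 𝔅, y ∈ W ∧ W ⊆ U := by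
  have := hJ.to_subtype
  let b := TopologicalSpace.countableBasis (∀ i : J, π i)
  have hb : TopologicalSpace.IsTopologicalBasis b := TopologicalSpace.isBasis_countableBasis _
  refine ⟨(J.domRestrict ⁻¹' ·) '' b, (TopologicalSpace.countable_countableBasis _).image _,
    forall_mem_image.2 fun B hB ↦ (hb.isOpen hB).preimage (Pi.continuous_domRestrict J), ?_⟩
  intro U hU hUJ y hy
  obtain ⟨V, hV, rfl⟩ := exists_isOpen_preimage_domRestrict_eq hU hUJ
  obtain ⟨B, hB, hyB, hBV⟩ := hb.exists_subset_of_mem_open (mem_preimage.1 hy) hV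
  exact ⟨_, mem_image_of_mem _ hB, hyB, preimage_mono hBV⟩

theorem exists_finset_isOpen_isSupportedOn_of_isCompact {K U : Set (∀ i, π i)} (hK : IsCompact K)
    (hU : IsOpen U) (hKU : K ⊆ U) :
    ∃ I : Finset ι, ∃ W, IsOpen W ∧ IsSupportedOn W I ∧ K ⊆ W ∧ W ⊆ U := by
  classical
  refine hK.induction_on
    (p := fun s ↦ ∃ I : Finset ι, ∃ W, IsOpen W ∧ IsSupportedOn W I ∧ s ⊆ W ∧ W ⊆ U) ?_ ?_ ?_ ?_
  · exact ⟨∅, ∅, isOpen_empty, fun _ _ _ ↦ rfl, Subset.rfl, empty_subset U⟩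
  · rintro s t hst ⟨I, W, hW, hWI, htW, hWU⟩
    exact ⟨I, W, hW, hWI, hst.trans htW, hWU⟩
  · rintro s t ⟨I, V, hV, hVI, hsV, hVU⟩ ⟨J, W, hW, hWJ, htW, hWU⟩
    exact ⟨I ∪ J, V ∪ W, hV.union hW, (hVI.mono (by simp)).union (hWJ.mono (by simp)),
      union_subset_union hsV htW, union_subset hVU hWU⟩
  · intro y hy
    obtain ⟨I, -, W, hW, hWI, hyW, hWU⟩ :=
      exists_finset_isOpen_isSupportedOn hU (dependsOn_univ _) (hKU hy)
    exact ⟨W, mem_nhdsWithin_of_mem_nhds (hW.mem_nhds hyW), I, W, hW, hWI, Subset.rfl, hWU⟩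

theorem exists_isClosed_countablySupported_of_isOpen [∀ i, CompactSpace (π i)]
    {C U : Set (∀ i, π i)} (hC : IsClosed C) (hU : IsOpen U) (hCU : C ⊆ U) :
    ∃ Z, IsClosed Z ∧ CountablySupported Z ∧ C ⊆ Z ∧ Z ⊆ U := by
  obtain ⟨I, W, hW, hWI, hUW, hWC⟩ := exists_finset_isOpen_isSupportedOn_of_isCompact
    hU.isClosed_compl.isCompact hC.isOpen_compl (compl_subset_compl.2 hCU)
  exact ⟨Wᶜ, hW.isClosed_compl, CountablySupported.compl ⟨I, I.countable_toSet, hWI⟩,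
    subset_compl_comm.1 hWC, compl_subset_comm.1 hUW⟩

theorem exists_isClosed_countablySupported_of_isGδ [∀ i, CompactSpace (π i)]
    {C G : Set (∀ i, π i)} (hC : IsClosed C) (hG : IsGδ G) (hCG : C ⊆ G) :
    ∃ Z, IsClosed Z ∧ CountablySupported Z ∧ C ⊆ Z ∧ Z ⊆ G := by
  obtain ⟨f, hf, rfl⟩ := isGδ_iff_eq_iInter_nat.1 hG
  choose Z hZ hZs hCZ hZf using fun n ↦
    exists_isClosed_countablySupported_of_isOpen hC (hf n) (hCG.trans (iInter_subset f n))
  refine ⟨⋂ n, Z n, isClosed_iInter hZ, ?_, subset_iInter hCZ, iInter_mono hZf⟩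
  simpa only [compl_iUnion, compl_compl] using
    (CountablySupported.iUnion fun n ↦ (hZs n).compl).compl

end Support

theorem mk_isClosed_countablySupported_le_continuum {Ω : Type u} [LinearOrder Ω] [IsOmegaOne Ω]
    (hΩ : #Ω ≤ 𝔠) {π : Ω → Type u} [∀ a, TopologicalSpace (π a)]
    [∀ a, SecondCountableTopology (π a)] :
    #{T : Set (∀ a, π a) | IsClosed T ∧ CountablySupported T} ≤ 𝔠 := by
  let 𝒯 (l : Ω) : Set (Set (∀ a, π a)) := ((Iio l).domRestrict ⁻¹' ·) '' {C | IsClosed C}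
  have hsub : {T : Set (∀ a, π a) | IsClosed T ∧ CountablySupported T} ⊆ ⋃ l, 𝒯 l := by
    rintro T ⟨hT, hTs⟩
    obtain ⟨l, hl⟩ := hTs.exists_isSupportedOn_Iio
    exact mem_iUnion.2 ⟨l, exists_isClosed_preimage_domRestrict_eq hT hl⟩
  have h𝒯 (l : Ω) : #(𝒯 l) ≤ 𝔠 :=
    have := (IsOmegaOne.countable_Iio l).to_subtype
    mk_image_le.trans (mk_isClosed_le_continuum _)
  calc _ ≤ #(⋃ l, 𝒯 l) := mk_le_mk_of_subset hsub
    _ ≤ #Ω * ⨆ l, #(𝒯 l) := mk_iUnion_le _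
    _ ≤ 𝔠 * 𝔠 := mul_le_mul' hΩ (ciSup_le' h𝒯)
    _ = 𝔠 := continuum_mul_self

/-! ### The uncovered kernel -/

section Kernel

variable {X : Type*} [TopologicalSpace X] {𝒵 : Set (Set X)} {D : Set X}

/-- The family `𝒢` is a k-cover of `S`: every compact subset of `S` lies in a member of `𝒢`. -/
def IsKCover (𝒢 : Set (Set X)) (S : Set X) : Prop :=
  ∀ C, IsCompact C → C ⊆ S → ∃ G ∈ 𝒢, C ⊆ G

/-- The set of points of `D` at which `D` is not locally covered by countably many members
of `𝒵`. -/
def uncoveredKernel (𝒵 : Set (Set X)) (D : Set X) : Set X :=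
  D \ ⋃₀ {W | IsOpen W ∧ CountablyCovered 𝒵 (W ∩ D)}

theorem isClosed_uncoveredKernel (hD : IsClosed D) : IsClosed (uncoveredKernel 𝒵 D) :=
  hD.sdiff (isOpen_sUnion fun _ hW ↦ hW.1)

theorem CountablyCovered.of_isLindelof_of_disjoint_uncoveredKernel {A : Set X} (hA : IsLindelof A)
    (hAD : A ⊆ D) (hAL : Disjoint A (uncoveredKernel 𝒵 D)) : CountablyCovered 𝒵 A := by
  refine .of_isLindelof hA fun x hx ↦ ?_
  obtain ⟨W, ⟨hW, hWD⟩, hxW⟩ := not_not.1 fun h ↦ disjoint_left.1 hAL hx ⟨hAD hx, h⟩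
  exact ⟨W ∩ A, mem_nhdsWithin.2 ⟨W, hW, hxW, Subset.rfl⟩,
    hWD.mono (inter_subset_inter_right W hAD)⟩

theorem exists_isOpen_inter_subset_of_isCompact [T2Space X] {A : Set X} (hA : IsCompact A)
    (hAne : A.Nonempty) {𝒢 : Set (Set X)} (h𝒢 : 𝒢.Countable) (hcl : ∀ G ∈ 𝒢, IsClosed G)
    (hA𝒢 : A ⊆ ⋃₀ 𝒢) : ∃ G ∈ 𝒢, ∃ U, IsOpen U ∧ (U ∩ A).Nonempty ∧ U ∩ A ⊆ G := by
  have := isCompact_iff_compactSpace.1 hA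
  have := hAne.to_subtype
  have := h𝒢.to_subtype
  obtain ⟨G, x, hx⟩ := nonempty_interior_of_iUnion_of_closed
    (f := fun G : 𝒢 ↦ ((↑) : A → X) ⁻¹' G) (fun G ↦ (hcl G G.2).preimage continuous_subtype_val)
    (by rwa [← preimage_iUnion, ← sUnion_eq_iUnion, preimage_eq_univ_iff, Subtype.range_val])
  obtain ⟨V, hVG, ⟨U, hU, rfl⟩, hxU⟩ := mem_interior.1 hx
  exact ⟨G, G.2, U, hU, ⟨x, hxU, x.2⟩, fun y hy ↦ hVG (a := ⟨y, hy.2⟩) hy.1⟩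

end Kernel

section Product

variable {ι : Type*} {π : ι → Type*} [∀ i, TopologicalSpace (π i)]

theorem exists_countable_notMem_cylinderHull [∀ i, T1Space (π i)] {S : Set (∀ i, π i)}
    (hS : IsLindelof S) {y : ∀ i, π i} (hy : y ∉ S) :
    ∃ J : Set ι, J.Countable ∧ y ∉ cylinderHull J S := by
  suffices h : ∃ J : Set ι, J.Countable ∧ ∀ s ∈ S, ∃ i ∈ J, s i ≠ y i by
    simpa only [mem_cylinderHull, not_exists, not_and, not_forall, exists_prop] using h
  refine hS.induction_on (p := fun A ↦ ∃ J : Set ι, J.Countable ∧ ∀ s ∈ A, ∃ i ∈ J, s i ≠ y i)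
    ?_ ?_ ?_
  · rintro A B hAB ⟨J, hJ, hB⟩
    exact ⟨J, hJ, fun s hs ↦ hB s (hAB hs)⟩
  · intro 𝒜 h𝒜 h
    choose! J hJ hne using h
    refine ⟨⋃ A ∈ 𝒜, J A, h𝒜.biUnion hJ, fun s ⟨A, hA, hs⟩ ↦ ?_⟩
    obtain ⟨i, hi, hsi⟩ := hne A hA s hs
    exact ⟨i, mem_biUnion hA hi, hsi⟩
  · intro s hs
    obtain ⟨i, hi⟩ := Function.ne_iff.1 (ne_of_mem_of_not_mem hs hy)
    exact ⟨{s' | s' i ≠ y i}, mem_nhdsWithin_of_mem_nhds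
      ((isOpen_ne.preimage (continuous_apply i)).mem_nhds hi), {i}, countable_singleton i,
      fun s' hs' ↦ ⟨i, rfl, hs'⟩⟩

theorem exists_countable_not_inter_subset_cylinderHull [∀ i, T1Space (π i)]
    [∀ i, SecondCountableTopology (π i)] {S L : Set (∀ i, π i)} (hS : IsLindelof S)
    (hL : ∀ W, IsOpen W → (W ∩ L).Nonempty → ¬ W ∩ L ⊆ S) {J : Set ι} (hJ : J.Countable) :
    ∃ J' : Set ι, J'.Countable ∧ ∀ W, IsOpen W → IsSupportedOn W J → (W ∩ L).Nonempty →
      ¬ W ∩ L ⊆ cylinderHull J' S := by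
  obtain ⟨𝔅, h𝔅, h𝔅o, hbasis⟩ := exists_countable_basis_isSupportedOn (π := π) hJ
  have hB : ∀ B ∈ 𝔅, ∃ J' : Set ι, J'.Countable ∧
      ((B ∩ L).Nonempty → ¬ B ∩ L ⊆ cylinderHull J' S) := by
    intro B hB
    by_cases hBL : (B ∩ L).Nonempty
    · obtain ⟨y, hy, hyS⟩ := not_subset.1 (hL B (h𝔅o B hB) hBL)
      obtain ⟨J', hJ', hyJ'⟩ := exists_countable_notMem_cylinderHull hS hyS
      exact ⟨J', hJ', fun _ h ↦ hyJ' (h hy)⟩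
    · exact ⟨∅, countable_empty, fun h ↦ absurd h hBL⟩
  choose! J' hJ' hBJ' using hB
  refine ⟨⋃ B ∈ 𝔅, J' B, h𝔅.biUnion hJ', ?_⟩
  rintro W hW hWJ ⟨y, hyW, hyL⟩ hsub
  obtain ⟨B, hB, hyB, hBW⟩ := hbasis W hW hWJ y hyW
  exact hBJ' B hB ⟨y, hyB, hyL⟩ (((inter_subset_inter_left L hBW).trans hsub).trans
    (cylinderHull_antitone S (subset_biUnion_of_mem hB)))

theorem exists_finset_inter_subset_preimage_domRestrict [∀ i, T2Space (π i)] {L : Set (∀ i, π i)}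
    (hL : IsCompact L) (hLne : L.Nonempty) {J : Set ι} {𝒢 : Set (Set (∀ i : J, π i))}
    (h𝒢 : 𝒢.Countable) (hcl : ∀ G ∈ 𝒢, IsClosed G) (hL𝒢 : J.domRestrict '' L ⊆ ⋃₀ 𝒢) :
    ∃ G ∈ 𝒢, ∃ I : Finset ι, ↑I ⊆ J ∧ ∃ W, IsOpen W ∧ IsSupportedOn W I ∧ (W ∩ L).Nonempty ∧
      W ∩ L ⊆ J.domRestrict ⁻¹' G := by
  obtain ⟨G, hG, U, hU, ⟨_, hyU, y, hyL, rfl⟩, hUG⟩ := exists_isOpen_inter_subset_of_isCompact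
    (hL.image (Pi.continuous_domRestrict J)) (hLne.image _) h𝒢 hcl hL𝒢
  obtain ⟨I, hIJ, W, hW, hWI, hyW, hWU⟩ := exists_finset_isOpen_isSupportedOn
    (hU.preimage (Pi.continuous_domRestrict J)) (IsSupportedOn.preimage_domRestrict U) hyU
  exact ⟨G, hG, I, hIJ, W, hW, hWI, ⟨y, hyW, hyL⟩,
    fun x hx ↦ hUG ⟨hWU hx.1, mem_image_of_mem _ hx.2⟩⟩

variable [∀ i, CompactSpace (π i)] [∀ i, T2Space (π i)] [∀ i, SecondCountableTopology (π i)]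
  {𝒵 : Set (Set (∀ i, π i))} {D W : Set (∀ i, π i)}

theorem CountablyCovered.inter_of_inter_uncoveredKernel (h𝒵 : ∀ Z ∈ 𝒵, CountablySupported Z)
    (hD : IsClosed D) (hWs : CountablySupported W)
    (hWL : CountablyCovered 𝒵 (W ∩ uncoveredKernel 𝒵 D)) : CountablyCovered 𝒵 (W ∩ D) := by
  obtain ⟨𝒲, h𝒲𝒵, h𝒲, hWL⟩ := hWL
  have hrest : CountablyCovered 𝒵 ((W ∩ (⋃₀ 𝒲)ᶜ) ∩ D) := by
    refine .of_isLindelof_of_disjoint_uncoveredKernel ?_ inter_subset_right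
      (disjoint_left.2 fun x hx hxL ↦ hx.1.2 (hWL ⟨hx.1.1, hxL⟩))
    rw [sUnion_eq_biUnion]
    exact (hWs.inter (CountablySupported.biUnion h𝒲 fun Z hZ ↦ h𝒵 Z (h𝒲𝒵 hZ)).compl).isLindelof
      |>.inter_right hD
  refine (CountablyCovered.union ⟨𝒲, h𝒲𝒵, h𝒲, Subset.rfl⟩ hrest).mono fun x hx ↦ ?_
  exact (em (x ∈ ⋃₀ 𝒲)).imp id fun h ↦ ⟨⟨hx.1, h⟩, hx.2⟩

theorem uncoveredKernel_nonempty (h𝒵 : ∀ Z ∈ 𝒵, CountablySupported Z) (hD : IsClosed D)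
    (hD𝒵 : ¬ CountablyCovered 𝒵 D) : (uncoveredKernel 𝒵 D).Nonempty := by
  by_contra! hL
  refine hD𝒵 (univ_inter D ▸ .inter_of_inter_uncoveredKernel h𝒵 hD
    ⟨∅, countable_empty, dependsOn_const _⟩ ?_)
  exact ⟨∅, empty_subset _, countable_empty, by rw [hL, inter_empty]; exact empty_subset _⟩

theorem not_countablyCovered_inter_uncoveredKernel (h𝒵 : ∀ Z ∈ 𝒵, CountablySupported Z)
    (hD : IsClosed D) (hW : IsOpen W) (hWs : CountablySupported W)
    (hWL : (W ∩ uncoveredKernel 𝒵 D).Nonempty) :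
    ¬ CountablyCovered 𝒵 (W ∩ uncoveredKernel 𝒵 D) := by
  intro h
  obtain ⟨x, hxW, -, hx⟩ := hWL
  exact hx ⟨W, ⟨hW, h.inter_of_inter_uncoveredKernel h𝒵 hD hWs⟩, hxW⟩

theorem not_inter_uncoveredKernel_subset (h𝒵 : ∀ Z ∈ 𝒵, CountablySupported Z) (hD : IsClosed D)
    {S : Set (∀ i, π i)} (hS : IsKCover 𝒵 S) (hW : IsOpen W)
    (hWL : (W ∩ uncoveredKernel 𝒵 D).Nonempty) : ¬ W ∩ uncoveredKernel 𝒵 D ⊆ S := by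
  intro hWS
  obtain ⟨x, hxW, hxL⟩ := hWL
  obtain ⟨T, hT, hTcl, hTW⟩ := exists_mem_nhds_isClosed_subset (hW.mem_nhds hxW)
  obtain ⟨Z, hZ, hTZ⟩ := hS _ (hTcl.inter (isClosed_uncoveredKernel hD)).isCompact
    ((inter_subset_inter_left _ hTW).trans hWS)
  obtain ⟨I, -, V, hV, hVI, hxV, hVT⟩ := exists_finset_isOpen_isSupportedOn isOpen_interior
    (dependsOn_univ _) (mem_interior_iff_mem_nhds.2 hT)
  refine not_countablyCovered_inter_uncoveredKernel h𝒵 hD hV ⟨I, I.countable_toSet, hVI⟩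
    ⟨x, hxV, hxL⟩ (.of_subset_mem hZ ?_)
  exact (inter_subset_inter_left _ (hVT.trans interior_subset)).trans hTZ

end Product

/-! ### Alster spaces -/

theorem isSigmaCompact_image_domRestrict_of_productivelyQuasiLindelofSp {ι : Type u}
    {π : ι → Type u} [∀ i, TopologicalSpace (π i)] [∀ i, CompactSpace (π i)] [∀ i, T2Space (π i)]
    [∀ i, SecondCountableTopology (π i)] (hCH : (𝔠 : Cardinal.{u}) = ℵ₁) {S : Set (∀ i, π i)}
    (hS : ProductivelyQuasiLindelofSp S) {J : Set ι} (hJ : J.Countable) :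
    IsSigmaCompact (J.domRestrict '' S) := by
  have := hJ.to_subtype
  have hcont : Continuous ((mapsTo_image J.domRestrict S).restrict) :=
    (Pi.continuous_domRestrict J).restrict _
  exact isSigmaCompact_of_productivelyQuasiLindelofSp hCH
    (hS.of_surjective hcont (surjective_mapsTo_image_restrict _ S))

section Alster

variable {Ω : Type u} [LinearOrder Ω] [IsOmegaOne Ω] {π : Ω → Type u}
  [∀ a, TopologicalSpace (π a)] [∀ a, T2Space (π a)] [∀ a, SecondCountableTopology (π a)]
  {S : Set (∀ a, π a)} {Z : Ω → Set (∀ a, π a)}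

theorem exists_isSupportedOn_and_not_inter_subset_cylinderHull (hS : IsLindelof S)
    (hZs : ∀ γ, CountablySupported (Z γ)) {L : Set (∀ a, π a)}
    (hL : ∀ W, IsOpen W → (W ∩ L).Nonempty → ¬ W ∩ L ⊆ S) :
    ∃ l : Ω, (∀ γ < l, IsSupportedOn (Z γ) (Iio l)) ∧
      ∀ W, ∀ I : Finset Ω, ↑I ⊆ Iio l → IsOpen W → IsSupportedOn W I → (W ∩ L).Nonempty →
        ¬ W ∩ L ⊆ cylinderHull (Iio l) S := by
  have hstep (c : Ω) : ∃ d, (∀ γ < c, IsSupportedOn (Z γ) (Iio d)) ∧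
      ∀ W, IsOpen W → IsSupportedOn W (Iio c) → (W ∩ L).Nonempty →
        ¬ W ∩ L ⊆ cylinderHull (Iio d) S := by
    obtain ⟨J, hJ, hJL⟩ :=
      exists_countable_not_inter_subset_cylinderHull hS hL (IsOmegaOne.countable_Iio c)
    choose e he using fun γ ↦ (hZs γ).exists_isSupportedOn_Iio
    obtain ⟨d, hd⟩ := IsOmegaOne.exists_forall_lt_of_countable
      (hJ.union ((IsOmegaOne.countable_Iio c).image e))
    refine ⟨d, fun γ hγ ↦ (he γ).mono (Iio_subset_Iio (hd _ (.inr ⟨γ, hγ, rfl⟩)).le), ?_⟩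
    exact fun W hW hWc hWL h ↦
      hJL W hW hWc hWL (h.trans (cylinderHull_antitone S fun i hi ↦ hd i (.inl hi)))
  choose g hgZ hgL using hstep
  obtain ⟨l, hl⟩ := IsOmegaOne.exists_closure_point g
  refine ⟨l, fun γ hγ ↦ ?_, fun W I hI hW hWI hWL h ↦ ?_⟩
  · obtain ⟨c, -, hgc, hγc⟩ := hl {γ} (by simpa using hγ)
    exact (hgZ c γ (hγc γ (by simp))).mono (Iio_subset_Iio hgc.le)
  · obtain ⟨c, -, hgc, hIc⟩ := hl I hI
    exact hgL c W hW (hWI.mono hIc) hWL (h.trans (cylinderHull_antitone S (Iio_subset_Iio hgc.le)))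

variable [∀ a, CompactSpace (π a)]

/-- A Baire category argument on the trace of the kernel of `D` in countably many coordinates. -/
theorem countablyCovered_of_forall_diff_subset_cylinderHull (hCH : (𝔠 : Cardinal.{u}) = ℵ₁)
    (hS : ProductivelyQuasiLindelofSp S) (hZ : ∀ γ, IsClosed (Z γ))
    (hZs : ∀ γ, CountablySupported (Z γ)) (hZS : IsKCover (range Z) S) {D : Set (∀ a, π a)}
    (hD : IsClosed D) (hDS : ∀ β, D \ initialUnion Z β ⊆ cylinderHull (Iio β) S) :
    CountablyCovered (range Z) D := by
  by_contra hDZ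
  have hZs' : ∀ V ∈ range Z, CountablySupported V := forall_mem_range.2 hZs
  let L := uncoveredKernel (range Z) D
  have hLc : IsCompact L := (isClosed_uncoveredKernel hD).isCompact
  obtain ⟨l, hlZ, hlL⟩ := exists_isSupportedOn_and_not_inter_subset_cylinderHull
    (isLindelof_iff_lindelofSpace.2 hS.lindelofSpace) hZs
    (L := L) fun W hW ↦ not_inter_uncoveredKernel_subset hZs' hD hZS hW
  have hl : (Iio l).Countable := IsOmegaOne.countable_Iio l
  let p := (Iio l).domRestrict (π := π)
  have hp : Continuous p := Pi.continuous_domRestrict _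
  obtain ⟨C, hC, hCS⟩ := isSigmaCompact_image_domRestrict_of_productivelyQuasiLindelofSp hCH hS hl
  let 𝒢 : Set (Set (∀ a : Iio l, π a)) := (fun γ ↦ p '' Z γ) '' Iio l ∪ range C
  have h𝒢 : 𝒢.Countable := (hl.image _).union (countable_range C)
  have h𝒢cl : ∀ G ∈ 𝒢, IsClosed G := by
    rintro _ (⟨γ, -, rfl⟩ | ⟨n, rfl⟩)
    exacts [((hZ γ).isCompact.image hp).isClosed, (hC n).isClosed]
  have hL𝒢 : p '' L ⊆ ⋃₀ 𝒢 := by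
    rintro _ ⟨x, hx, rfl⟩
    by_cases hxl : x ∈ initialUnion Z l
    · obtain ⟨γ, hγ, hxγ⟩ := mem_iUnion₂.1 hxl
      exact ⟨_, .inl ⟨γ, hγ, rfl⟩, mem_image_of_mem p hxγ⟩
    · obtain ⟨n, hn⟩ := mem_iUnion.1 (hCS.superset (hDS l ⟨hx.1, hxl⟩))
      exact ⟨C n, .inr ⟨n, rfl⟩, hn⟩
  obtain ⟨_, hG, I, hI, W, hW, hWI, hWL, hWG⟩ := exists_finset_inter_subset_preimage_domRestrict
    hLc (uncoveredKernel_nonempty hZs' hD hDZ) h𝒢 h𝒢cl hL𝒢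
  rcases hG with ⟨γ, hγ, rfl⟩ | ⟨n, rfl⟩
  · refine not_countablyCovered_inter_uncoveredKernel hZs' hD hW ⟨I, I.countable_toSet, hWI⟩ hWL
      (.of_subset_mem (mem_range_self γ) ?_)
    rwa [← (hlZ γ hγ).cylinderHull_eq]
  · refine hlL W I hI hW hWI hWL (hWG.trans (preimage_mono ?_))
    exact (subset_iUnion C n).trans hCS.subset

theorem IsKCover.countablyCovered_range (hCH : (𝔠 : Cardinal.{u}) = ℵ₁)
    (hS : ProductivelyQuasiLindelofSp S) (hZ : ∀ γ, IsClosed (Z γ))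
    (hZs : ∀ γ, CountablySupported (Z γ)) (hZS : IsKCover (range Z) S) :
    CountablyCovered (range Z) S := by
  rw [countablyCovered_range_iff]
  have hN (β : Ω) : CountablySupported (initialUnion Z β) :=
    .biUnion (IsOmegaOne.countable_Iio β) fun γ _ ↦ hZs γ
  have hull (β : Ω) : CountablySupported (cylinderHull (Iio β) S) :=
    ⟨Iio β, IsOmegaOne.countable_Iio β, isSupportedOn_cylinderHull _ _⟩
  let B : Set (∀ a, π a) := ⋃ β, (cylinderHull (Iio β) S ∪ initialUnion Z β)ᶜ
  have hBN (β : Ω) : B ∩ initialUnion Z β =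
      (⋃ γ ∈ Iio β, (cylinderHull (Iio γ) S ∪ initialUnion Z γ)ᶜ) ∩ initialUnion Z β := by
    refine Subset.antisymm ?_ (inter_subset_inter_left _ (iUnion₂_subset_iUnion _ _))
    rintro x ⟨hxB, hxβ⟩
    obtain ⟨γ, hxγ⟩ := mem_iUnion.1 hxB
    exact ⟨mem_biUnion (not_le.1 fun h ↦ hxγ (.inr (monotone_initialUnion Z h hxβ))) hxγ, hxβ⟩
  refine exists_subset_of_productivelyQuasiLindelofSp (B := B) hS ?_ (monotone_initialUnion Z)
    (fun β ↦ ?_) (fun β ↦ (hN β).compl.isLindelof) fun D hD hDB ↦ ?_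
  · refine disjoint_iUnion_right.2 fun β ↦ disjoint_compl_right_iff_subset.2 ?_
    exact (subset_cylinderHull _ S).trans subset_union_left
  · rw [hBN]
    exact ((CountablySupported.biUnion (IsOmegaOne.countable_Iio β) fun γ _ ↦
      ((hull γ).union (hN γ)).compl).inter (hN β)).isLindelof
  · rw [← countablyCovered_range_iff]
    refine countablyCovered_of_forall_diff_subset_cylinderHull hCH hS hZ hZs hZS hD fun β ↦ ?_
    rw [sdiff_subset_iff, union_comm]
    exact disjoint_compl_right_iff_subset.1 (disjoint_iUnion_right.1 hDB β)

end Alster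

/-- An Alster space: every k-cover by `Gδ` sets has a countable subcover. -/
def AlsterSpace (X : Type*) [TopologicalSpace X] : Prop :=
  ∀ 𝒢 : Set (Set X), (∀ G ∈ 𝒢, IsGδ G) → IsKCover 𝒢 univ → CountablyCovered 𝒢 univ

theorem alsterSpace_of_productivelyQuasiLindelofSp {Ω : Type u} [LinearOrder Ω] [IsOmegaOne Ω]
    {π : Ω → Type u} [∀ a, TopologicalSpace (π a)] [∀ a, CompactSpace (π a)] [∀ a, T2Space (π a)]
    [∀ a, SecondCountableTopology (π a)] (hCH : (𝔠 : Cardinal.{u}) = ℵ₁) (hΩ : #Ω ≤ 𝔠)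
    {S : Set (∀ a, π a)} (hS : ProductivelyQuasiLindelofSp S) : AlsterSpace S := by
  intro 𝒢 h𝒢 hk
  let 𝒵 : Set (Set (∀ a, π a)) :=
    {T | (IsClosed T ∧ CountablySupported T) ∧ ∃ G ∈ 𝒢, ((↑) : S → ∀ a, π a) ⁻¹' T ⊆ G}
  have h𝒵 : IsKCover 𝒵 S := by
    intro C hC hCS
    obtain ⟨G, hG, hCG⟩ := hk _ (Topology.IsEmbedding.subtypeVal.isCompact_preimage' hC
      (by rwa [Subtype.range_val])) (subset_univ _)
    obtain ⟨f, hf, rfl⟩ := isGδ_iff_eq_iInter_nat.1 (h𝒢 G hG)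
    choose U hU hUf using hf
    obtain ⟨T, hT, hTs, hCT, hTU⟩ := exists_isClosed_countablySupported_of_isGδ hC.isClosed
      (.iInter_of_isOpen hU) (subset_iInter fun n x hx ↦ by
        have := mem_iInter.1 (hCG (a := ⟨x, hCS hx⟩) hx) n
        rwa [← hUf n] at this)
    refine ⟨T, ⟨⟨hT, hTs⟩, _, hG, fun x hx ↦ mem_iInter.2 fun n ↦ ?_⟩, hCT⟩
    rw [← hUf n]
    exact mem_iInter.1 (hTU hx) n
  obtain ⟨Z, hZ⟩ := IsOmegaOne.exists_range_eq (Ω := Ω) (A := 𝒵)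
    (let ⟨T, hT, _⟩ := h𝒵 ∅ isCompact_empty (empty_subset S); ⟨T, hT⟩)
    (hCH ▸ (mk_le_mk_of_subset fun _ hT ↦ hT.1).trans
      (mk_isClosed_countablySupported_le_continuum hΩ))
  have hZ𝒵 (γ : Ω) : Z γ ∈ 𝒵 := hZ ▸ mem_range_self γ
  have hcov : CountablyCovered (range Z) S := IsKCover.countablyCovered_range hCH hS
    (fun γ ↦ (hZ𝒵 γ).1.1) (fun γ ↦ (hZ𝒵 γ).1.2) (hZ ▸ h𝒵)
  refine ((hcov.preimage ((↑) : S → ∀ a, π a)).mono fun x _ ↦ x.2).of_refinement ?_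
  exact forall_mem_image.2 (forall_mem_range.2 fun γ ↦ (hZ𝒵 γ).2)

/-! ### Countable powers of Alster spaces -/

theorem exists_finite_subset_sUnion_of_isCompact {X : Type*} [TopologicalSpace X] {K : Set X}
    (hK : IsCompact K) {𝒰 : Set (Set X)} (h𝒰 : ∀ U ∈ 𝒰, IsOpen U) (hK𝒰 : K ⊆ ⋃₀ 𝒰) :
    ∃ ℱ ⊆ 𝒰, ℱ.Finite ∧ K ⊆ ⋃₀ ℱ := by
  rw [sUnion_eq_biUnion] at hK𝒰
  obtain ⟨ℱ, hℱ𝒰, hℱ, hKℱ⟩ := hK.elim_finite_subcover_image h𝒰 hK𝒰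
  exact ⟨ℱ, hℱ𝒰, hℱ, by rwa [sUnion_eq_biUnion]⟩

theorem exists_isGδ_forall_prod_subset_sUnion {Y X : Type*} [TopologicalSpace Y]
    [TopologicalSpace X] {A : Set Y} (hA : IsCompact A) {C : Set X} (hC : IsCompact C)
    {𝒱 : Set (Set (Y × X))} (h𝒱 : 𝒱.Countable) (h𝒱o : ∀ V ∈ 𝒱, IsOpen V) :
    ∃ G, IsGδ G ∧ C ⊆ G ∧ ∀ 𝒲 ⊆ 𝒱, A ×ˢ C ⊆ ⋃₀ 𝒲 → A ×ˢ G ⊆ ⋃₀ 𝒲 := by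
  have htube : ∀ ℱ ∈ {ℱ : Set (Set (Y × X)) | ℱ.Finite ∧ ℱ ⊆ 𝒱}, ∃ O : Set X, IsOpen O ∧ C ⊆ O ∧
      (A ×ˢ C ⊆ ⋃₀ ℱ → A ×ˢ O ⊆ ⋃₀ ℱ) := by
    rintro ℱ ⟨-, hℱ⟩
    by_cases hACℱ : A ×ˢ C ⊆ ⋃₀ ℱ
    · obtain ⟨P, O, -, hO, hAP, hCO, hPO⟩ :=
        generalized_tube_lemma hA hC (isOpen_sUnion fun V hV ↦ h𝒱o V (hℱ hV)) hACℱ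
      exact ⟨O, hO, hCO, fun _ ↦ (prod_mono_left hAP).trans hPO⟩
    · exact ⟨univ, isOpen_univ, subset_univ C, fun h ↦ absurd h hACℱ⟩
  choose! O hO hCO hAO using htube
  refine ⟨⋂ ℱ ∈ {ℱ : Set (Set (Y × X)) | ℱ.Finite ∧ ℱ ⊆ 𝒱}, O ℱ,
    .biInter_of_isOpen (countable_ofPred_finite_subset h𝒱) hO, subset_iInter₂ hCO, ?_⟩
  intro 𝒲 h𝒲 hAC
  obtain ⟨ℱ, hℱ𝒲, hℱ, hACℱ⟩ :=
    exists_finite_subset_sUnion_of_isCompact (hA.prod hC) (fun W hW ↦ h𝒱o W (h𝒲 hW)) hAC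
  have hℱ' : ℱ ∈ {ℱ : Set (Set (Y × X)) | ℱ.Finite ∧ ℱ ⊆ 𝒱} := ⟨hℱ, hℱ𝒲.trans h𝒲⟩
  calc A ×ˢ (⋂ ℱ ∈ {ℱ : Set (Set (Y × X)) | ℱ.Finite ∧ ℱ ⊆ 𝒱}, O ℱ)
    _ ⊆ A ×ˢ O ℱ := prod_mono_right (biInter_subset_of_mem hℱ')
    _ ⊆ ⋃₀ ℱ := hAO ℱ hℱ' hACℱ
    _ ⊆ ⋃₀ 𝒲 := sUnion_subset_sUnion hℱ𝒲

section PowerOmega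

variable {X : Type u} [TopologicalSpace X]

theorem IsBasicOpen.isOpen {U : Set (ℕ → X)} (hU : IsBasicOpen X U) : IsOpen U := by
  obtain ⟨V, hV, hfin, rfl⟩ := hU
  have hpi : Set.univ.pi V = {i | V i ≠ Set.univ}.pi V := by
    refine (pi_mono' (fun _ _ ↦ Subset.rfl) (subset_univ _)).antisymm fun x hx i _ ↦ ?_
    by_cases hi : V i = Set.univ
    · exact hi ▸ mem_univ (x i)
    · exact hx i hi
  exact hpi ▸ isOpen_set_pi hfin fun i _ ↦ hV i

theorem exists_isBasicOpen_subset {U : Set (ℕ → X)} (hU : IsOpen U) {x : ℕ → X} (hx : x ∈ U) :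
    ∃ V, IsBasicOpen X V ∧ x ∈ V ∧ V ⊆ U := by
  classical
  obtain ⟨I, u, hu, hIU⟩ := isOpen_pi_iff.1 hU x hx
  refine ⟨_, ⟨fun i ↦ if i ∈ (I : Set ℕ) then u i else univ, fun i ↦ ?_, ?_, rfl⟩, ?_, ?_⟩
  · dsimp only
    split_ifs with hi
    exacts [(hu i hi).1, isOpen_univ]
  · exact I.finite_toSet.subset fun i hi ↦ by_contra fun h ↦ hi (if_neg h)
  · rw [univ_pi_ite]
    exact fun i hi ↦ (hu i hi).2
  · rwa [univ_pi_ite]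

variable {𝒰 : Set (Set (ℕ → X))} {n : ℕ} {L : ℕ → Set X}

/-- For fixed coordinates beyond `n`, finitely many of the countably many boxes cover the compact
slice over `C`, so that countably many applications of the tube lemma suffice. -/
theorem CountablyCovered.exists_isGδ_of_isCompact (h𝒰 : ∀ U ∈ 𝒰, IsBasicOpen X U)
    (hL : ∀ i, IsCompact (L i)) {C : Set X} (hC : IsCompact C)
    (h : CountablyCovered 𝒰 ((Iio n).pi L ∩ Function.eval n ⁻¹' C)) :
    ∃ G, IsGδ G ∧ C ⊆ G ∧ CountablyCovered 𝒰 ((Iio n).pi L ∩ Function.eval n ⁻¹' G) := by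
  obtain ⟨𝒱, h𝒱𝒰, h𝒱, hcov⟩ := h
  choose! V hVo _ hV using fun U (hU : U ∈ 𝒱) ↦ h𝒰 U (h𝒱𝒰 hU)
  let head (U : Set (ℕ → X)) : Set ((Iio n → X) × X) :=
    (univ.pi fun i : Iio n ↦ V U i) ×ˢ V U n
  obtain ⟨G, hG, hCG, hGtube⟩ := exists_isGδ_forall_prod_subset_sUnion
    (isCompact_univ_pi fun i : Iio n ↦ hL i) hC (h𝒱.image head)
    (forall_mem_image.2 fun U hU ↦
      (isOpen_set_pi finite_univ fun i _ ↦ hVo U hU i.1).prod (hVo U hU n))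
  refine ⟨G, hG, hCG, 𝒱, h𝒱𝒰, h𝒱, fun x ⟨hxL, hxG⟩ ↦ ?_⟩
  let 𝒲 : Set (Set (ℕ → X)) := {U ∈ 𝒱 | ∀ i, n < i → x i ∈ V U i}
  have hslice : (univ.pi fun i : Iio n ↦ L i) ×ˢ C ⊆ ⋃₀ (head '' 𝒲) := by
    rintro ⟨u, c⟩ ⟨hu, hc⟩
    let y (i : ℕ) : X := if h : i < n then u ⟨i, h⟩ else if i = n then c else x i
    have hyu (i : Iio n) : y i = u i := dif_pos i.2
    have hyc : y n = c := by simp [y]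
    have hyx (i : ℕ) (hi : n < i) : y i = x i := by simp [y, hi.not_gt, hi.ne']
    have hyL : y ∈ (Iio n).pi L := fun i hi ↦ (hyu ⟨i, hi⟩).symm ▸ hu ⟨i, hi⟩ trivial
    have hyC : y n ∈ C := hyc.symm ▸ hc
    obtain ⟨U, hU, hyU⟩ := hcov ⟨hyL, hyC⟩
    rw [hV U hU] at hyU
    refine ⟨head U, ⟨U, ⟨hU, fun i hi ↦ hyx i hi ▸ hyU i trivial⟩, rfl⟩, fun i _ ↦ ?_, ?_⟩
    · exact Eq.subst (motive := (· ∈ V U i)) (hyu i) (hyU i trivial)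
    · exact Eq.subst (motive := (· ∈ V U n)) hyc (hyU n trivial)
  obtain ⟨_, ⟨U, ⟨hU, hxU⟩, rfl⟩, hxhead, hxn⟩ := hGtube _ (image_mono (sep_subset 𝒱 _)) hslice
    (mk_mem_prod (a := (Iio n).domRestrict x) (fun i _ ↦ hxL i i.2) hxG)
  refine ⟨U, hU, hV U hU ▸ fun i _ ↦ ?_⟩
  rcases lt_trichotomy i n with hi | rfl | hi
  exacts [hxhead ⟨i, hi⟩ trivial, hxn, hxU i hi]

theorem AlsterSpace.exists_isCompact_not_countablyCovered (hX : AlsterSpace X)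
    (h𝒰 : ∀ U ∈ 𝒰, IsBasicOpen X U) (hL : ∀ i, IsCompact (L i))
    (h : ¬ CountablyCovered 𝒰 ((Iio n).pi L)) :
    ∃ C, IsCompact C ∧ ¬ CountablyCovered 𝒰 ((Iio n).pi L ∩ Function.eval n ⁻¹' C) := by
  by_contra! hC
  obtain ⟨𝒢, h𝒢, h𝒢c, hcov⟩ := hX
    {G | IsGδ G ∧ CountablyCovered 𝒰 ((Iio n).pi L ∩ Function.eval n ⁻¹' G)} (fun _ hG ↦ hG.1)
    fun C hCc _ ↦
      let ⟨G, hG, hCG, hGcov⟩ := (hC C hCc).exists_isGδ_of_isCompact h𝒰 hL hCc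
      ⟨G, ⟨hG, hGcov⟩, hCG⟩
  refine h ((CountablyCovered.sUnion (h𝒢c.image fun G ↦ (Iio n).pi L ∩ Function.eval n ⁻¹' G)
    (forall_mem_image.2 fun G hG ↦ (h𝒢 hG).2)).mono fun x hx ↦ ?_)
  obtain ⟨G, hG, hxG⟩ := hcov (mem_univ (x n))
  exact ⟨_, mem_image_of_mem _ hG, hx, hxG⟩

theorem exists_Iio_pi_subset_of_isCompact (hL : ∀ i, IsCompact (L i)) {W : Set (ℕ → X)}
    (hW : IsOpen W) (hLW : univ.pi L ⊆ W) : ∃ k, (Iio k).pi L ⊆ W := by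
  classical
  by_cases hne : ∀ i, (L i).Nonempty
  · choose z hz using hne
    obtain ⟨I, V, -, hVI, hLV, hVW⟩ :=
      exists_finset_isOpen_isSupportedOn_of_isCompact (isCompact_univ_pi hL) hW hLW
    obtain ⟨k, hk⟩ := I.bddAbove
    refine ⟨k + 1, fun x hx ↦ hVW ?_⟩
    have hxz : (Iic k).piecewise x z ∈ univ.pi L := fun i _ ↦ by
      by_cases hi : i ≤ k
      · exact (piecewise_eq_of_mem (Iic k) x z hi).symm ▸ hx i (Nat.lt_succ_of_le hi)
      · exact (piecewise_eq_of_notMem (Iic k) x z hi).symm ▸ hz i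
    exact hVI.mem_of_mem (fun i hi ↦ piecewise_eq_of_mem (Iic k) x z (hk hi)) (hLV hxz)
  · push Not at hne
    obtain ⟨i, hi⟩ := hne
    exact ⟨i + 1, fun x hx ↦ absurd (hx i i.lt_succ_self) (hi ▸ notMem_empty _)⟩

theorem AlsterSpace.exists_isCompact_forall_not_countablyCovered (hX : AlsterSpace X)
    (h𝒰 : ∀ U ∈ 𝒰, IsBasicOpen X U) (h : ¬ CountablyCovered 𝒰 univ) :
    ∃ L : ℕ → Set X, (∀ i, IsCompact (L i)) ∧ ∀ n, ¬ CountablyCovered 𝒰 ((Iio n).pi L) := by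
  have hstep : ∀ n (A : Set (ℕ → X)), ∃ C, IsCompact C ∧
      ((∃ L : ℕ → Set X, (∀ i, IsCompact (L i)) ∧ A = (Iio n).pi L) → ¬ CountablyCovered 𝒰 A →
        ¬ CountablyCovered 𝒰 (A ∩ Function.eval n ⁻¹' C)) := by
    intro n A
    by_cases hA : (∃ L : ℕ → Set X, (∀ i, IsCompact (L i)) ∧ A = (Iio n).pi L) ∧
      ¬ CountablyCovered 𝒰 A
    · obtain ⟨⟨L, hL, rfl⟩, hA⟩ := hA
      obtain ⟨C, hC, hCA⟩ := hX.exists_isCompact_not_countablyCovered h𝒰 hL hA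
      exact ⟨C, hC, fun _ _ ↦ hCA⟩
    · exact ⟨∅, isCompact_empty, fun hL hA' ↦ absurd ⟨hL, hA'⟩ hA⟩
  choose C hC hCA using hstep
  let A (n : ℕ) : Set (ℕ → X) := n.rec univ fun n A ↦ A ∩ Function.eval n ⁻¹' C n A
  let L (n : ℕ) : Set X := C n (A n)
  have hAL (n : ℕ) : A n = (Iio n).pi L := by
    induction n with
    | zero => simp [A]
    | succ n ih =>
      rw [← Order.succ_eq_add_one, Order.Iio_succ_eq_insert, insert_pi, ← ih, inter_comm]
      rfl
  refine ⟨L, fun i ↦ hC i (A i), fun n ↦ hAL n ▸ ?_⟩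
  induction n with
  | zero => exact h
  | succ n ih => exact hCA n (A n) ⟨L, fun i ↦ hC i (A i), hAL n⟩ ih

theorem AlsterSpace.lindelofSpace_pi_nat (hX : AlsterSpace X) : LindelofSpace (ℕ → X) := by
  rw [← isLindelof_univ_iff, isLindelof_iff_countablyCovered]
  intro 𝒰 h𝒰 hcov
  let 𝒱 : Set (Set (ℕ → X)) := {V | IsBasicOpen X V ∧ ∃ U ∈ 𝒰, V ⊆ U}
  have h𝒱o : ∀ V ∈ 𝒱, IsOpen V := fun V hV ↦ hV.1.isOpen
  suffices h : CountablyCovered 𝒱 univ from h.of_refinement fun V hV ↦ hV.2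
  by_contra h𝒱
  obtain ⟨L, hL, hL𝒱⟩ := hX.exists_isCompact_forall_not_countablyCovered (fun V hV ↦ hV.1) h𝒱
  obtain ⟨ℱ, hℱ𝒱, hℱ, hLℱ⟩ :=
    exists_finite_subset_sUnion_of_isCompact (isCompact_univ_pi hL) h𝒱o fun x _ ↦ by
      obtain ⟨U, hU, hxU⟩ := hcov (mem_univ x)
      obtain ⟨V, hV, hxV, hVU⟩ := exists_isBasicOpen_subset (h𝒰 U hU) hxU
      exact ⟨V, ⟨hV, U, hU, hVU⟩, hxV⟩
  obtain ⟨k, hk⟩ := exists_Iio_pi_subset_of_isCompact hL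
    (isOpen_sUnion fun V hV ↦ h𝒱o V (hℱ𝒱 hV)) hLℱ
  exact hL𝒱 k ⟨ℱ, hℱ𝒱, hℱ.countable, hk⟩

end PowerOmega

/-! ### Reduction through a network -/

section Network

open scoped unitInterval

theorem exists_continuousMap_pos_subset {X : Type*} [TopologicalSpace X]
    [CompletelyRegularSpace X] {U : Set X} (hU : IsOpen U) {x : X} (hx : x ∈ U) :
    ∃ f : C(X, I), 0 < f x ∧ {y | 0 < f y} ⊆ U := by
  obtain ⟨g, hg, hgx, hgU⟩ := CompletelyRegularSpace.completely_regular_isOpen x U hU hx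
  refine ⟨⟨fun y ↦ unitInterval.symm (g y), by fun_prop⟩, by simp [hgx], fun y hy ↦ ?_⟩
  by_contra hyU
  simp [hgU hyU] at hy

theorem exists_continuousMap_pi_pos_subset {ι : Type*} {X : ι → Type*}
    [∀ i, TopologicalSpace (X i)] [∀ i, CompletelyRegularSpace (X i)] {U : Set (∀ i, X i)}
    (hU : IsOpen U) {x : ∀ i, X i} (hx : x ∈ U) :
    ∃ f : ∀ i, C(X i, I), (∀ i, 0 < f i (x i)) ∧
      ∃ F : Finset ι, {y | ∀ i ∈ F, 0 < f i (y i)} ⊆ U := by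
  obtain ⟨F, V, hV, hVU⟩ := isOpen_pi_iff.1 hU x hx
  have hf (i : ι) : ∃ f : C(X i, I), 0 < f (x i) ∧ (i ∈ F → {y | 0 < f y} ⊆ V i) := by
    by_cases hi : i ∈ F
    · obtain ⟨f, hfx, hfV⟩ := exists_continuousMap_pos_subset (hV i hi).1 (hV i hi).2
      exact ⟨f, hfx, fun _ ↦ hfV⟩
    · exact ⟨1, zero_lt_one, fun h ↦ absurd h hi⟩
  choose f hfx hfV using hf
  exact ⟨f, hfx, F, fun y hy ↦ hVU fun i hi ↦ hfV i hi (hy i hi)⟩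

variable {X : Type u} [TopologicalSpace X] [CompletelyRegularSpace X] {N : Set (Set X)}

theorem IsNetwork.exists_continuousMap_family (hN : IsNetwork X N) {𝒰 : Set (Set (ℕ → X))}
    (h𝒰 : ∀ U ∈ 𝒰, IsOpen U) (hcov : Set.univ ⊆ ⋃₀ 𝒰) :
    ∃ f : (ℕ → N) → ℕ → C(X, I), ∀ x : ℕ → X, ∃ t, (∀ i, 0 < f t i (x i)) ∧
      ∃ F : Finset ℕ, ∃ U ∈ 𝒰, {y | ∀ i ∈ F, 0 < f t i (y i)} ⊆ U := by
  let P (t : ℕ → N) (f : ℕ → C(X, I)) : Prop := (∀ i, ∀ z ∈ (t i : Set X), 0 < f i z) ∧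
    ∃ F : Finset ℕ, ∃ U ∈ 𝒰, {y | ∀ i ∈ F, 0 < f i (y i)} ⊆ U
  choose! f hf using fun (t : ℕ → N) (h : ∃ f, P t f) ↦ h
  refine ⟨f, fun x ↦ ?_⟩
  obtain ⟨U, hU, hxU⟩ := hcov (mem_univ x)
  obtain ⟨g, hgx, F, hgU⟩ := exists_continuousMap_pi_pos_subset (h𝒰 U hU) hxU
  choose t htN hxt htg using fun i ↦
    hN (x i) {z | 0 < g i z} (isOpen_lt continuous_const (g i).continuous) (hgx i)
  obtain ⟨hpos, hsub⟩ := hf (fun i ↦ ⟨t i, htN i⟩) ⟨g, htg, F, U, hU, hgU⟩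
  exact ⟨_, fun i ↦ hpos i (x i) (hxt i), hsub⟩

theorem mk_nat_arrow_prod_nat_le_continuum {N : Type u} (hN : #N ≤ 𝔠) :
    #((ℕ → N) × ℕ) ≤ 𝔠 := by
  have hpow : #(ℕ → N) ≤ 𝔠 :=
    calc #(ℕ → N) = #N ^ ℵ₀ := by simp
      _ ≤ 𝔠 ^ ℵ₀ := power_le_power_right hN
      _ = 𝔠 := continuum_power_aleph0
  simpa using mul_le_mul_left hpow ℵ₀

theorem ProductivelyQuasiLindelofSp.lindelofSpace_pi_nat_of_isNetwork
    (hCH : (𝔠 : Cardinal.{u}) = ℵ₁) (hX : ProductivelyQuasiLindelofSp X) (hN : IsNetwork X N)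
    (hNc : #N ≤ 𝔠) : LindelofSpace (ℕ → X) := by
  rw [← isLindelof_univ_iff, isLindelof_iff_countablyCovered]
  intro 𝒰 h𝒰 hcov
  cases isEmpty_or_nonempty X
  · exact ⟨∅, empty_subset 𝒰, countable_empty, fun x ↦ isEmptyElim (x 0)⟩
  have : Nonempty N :=
    let ⟨n, hn, _⟩ := hN (Classical.arbitrary X) Set.univ isOpen_univ trivial
    ⟨n, hn⟩
  obtain ⟨f, hf⟩ := hN.exists_continuousMap_family h𝒰 hcov
  let Ω := (ℵ₁ : Cardinal.{u}).ord.ToType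
  obtain ⟨c, hc⟩ : ∃ c : Ω → (ℕ → N) × ℕ, range c = Set.univ :=
    IsOmegaOne.exists_range_eq univ_nonempty
      (by simpa only [mk_univ, hCH] using mk_nat_arrow_prod_nat_le_continuum hNc)
  let e (x : X) (a : Ω) : ULift.{u} I := ULift.up (f (c a).1 (c a).2 x)
  have he : Continuous e := by fun_prop
  have hS : ProductivelyQuasiLindelofSp (range e) :=
    hX.of_surjective he.rangeFactorization rangeFactorization_surjective
  have := (alsterSpace_of_productivelyQuasiLindelofSp hCH
    (by rw [mk_ord_toType, hCH]) hS).lindelofSpace_pi_nat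
  refine .of_surjective_lindelofSpace (.piMap fun _ : ℕ ↦ rangeFactorization_surjective (f := e))
    fun x ↦ ?_
  obtain ⟨t, htx, F, U, hU, hFU⟩ := hf x
  choose a ha using fun i ↦ range_eq_univ.1 hc (t, i)
  have hea (i : ℕ) (y : X) : (e y (a i)).down = f t i y := by simp only [e, ha]
  refine ⟨{z | ∀ i ∈ F, 0 < ((z i).1 (a i)).down}, ?_, fun i _ ↦ (hea i (x i)).symm ▸ htx i,
    U, hU, fun y hy ↦ hFU fun i hi ↦ hea i (y i) ▸ hy i hi⟩
  simp only [ofPred_forall]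
  refine isOpen_biInter_finset fun i _ ↦ isOpen_lt continuous_const ?_
  exact continuous_uliftDown.comp <|
    (continuous_apply (a i)).comp (continuous_subtype_val.comp (continuous_apply i))

end Network

theorem continuum_eq_aleph_one_universe_irrel (h : (𝔠 : Cardinal.{v}) = ℵ₁) :
    (𝔠 : Cardinal.{u}) = ℵ₁ := by
  rw [← lift_inj.{u, v}, lift_continuum, lift_aleph, Ordinal.lift_one]
  simpa using congrArg lift.{u} h

/-- Under CH, every productively Lindelöf space with network weight
at most 𝔠 is powerfully Lindelöf. -/
theorem stmt4 (hCH : Cardinal.continuum = Cardinal.aleph 1)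
    (X : Type u) [TopologicalSpace X]
    (hprod : ProductivelyLindelofSp X)
    (hnw : ∃ N : Set (Set X), IsNetwork X N ∧ #N ≤ Cardinal.continuum) :
    PowerfullyLindelofSp X := by
  obtain ⟨N, hN, hNc⟩ := hnw
  have := hprod.t3Space
  have := hprod.productivelyQuasiLindelofSp.lindelofSpace
  have : NormalSpace X := .of_regularSpace_lindelofSpace
  have : LindelofSpace (ℕ → X) :=
    hprod.productivelyQuasiLindelofSp.lindelofSpace_pi_nat_of_isNetwork
      (continuum_eq_aleph_one_universe_irrel hCH) hN hNc
  exact ⟨inferInstance, inferInstance, quasiLindelofSp_iff_lindelofSpace.2 this⟩
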